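/- Assume Conditions L₁, C, D and K (so that in particular κ(q,h) = Σ_{b mod qq', b≡h mod q} κ(qq',b) and the series Σ_{k≥0} B(p^k) converges). Then for every prime p, the weighted p-adic density equals χ̃_p(𝒜); that is, χ̃_p(𝒜) = lim_{m→∞} p^m M(p^m). -/

import Mathlib

open Finset MeasureTheory Filter
open scoped BigOperators Classical Real

noncomputable section

/-- `e(z) = exp(2πiz)`. -/
def eC (z : ℝ) : ℂ := Complex.exp (2 * Real.pi * Complex.I * z)

/-- The quadratic form `f(x) = xᵀ F x` over `ℤ`. -/
def qf {s : ℕ} (F : Matrix (Fin s) (Fin s) ℤ) (x : Fin s → ℤ) : ℤ :=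
  ∑ i, ∑ j, F i j * x i * x j

/-- The quadratic form `f(x) = xᵀ F x` over `ℝ`. -/
def qfR {s : ℕ} (F : Matrix (Fin s) (Fin s) ℤ) (x : Fin s → ℝ) : ℝ :=
  ∑ i, ∑ j, (F i j : ℝ) * x i * x j

/-- `A(X) = ∑_{1 ≤ x ≤ X} a_x`. -/
def Asum (a : ℕ → ℝ) (X : ℝ) : ℝ := ∑ x ∈ Finset.Icc 1 ⌊X⌋₊, a x

/-- `A(q,h;X) = ∑_{1 ≤ x ≤ X, x ≡ h (mod q)} a_x`. -/
def AsumMod (a : ℕ → ℝ) (q h : ℕ) (X : ℝ) : ℝ :=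
  ∑ x ∈ (Finset.Icc 1 ⌊X⌋₊).filter (fun x => x % q = h % q), a x

/-- The off-diagonal block `F₂` of `F` (with `n = ⌊s/2⌋`), as a matrix over `ℚ`. -/
def F2block {s : ℕ} (F : Matrix (Fin s) (Fin s) ℤ) :
    Matrix (Fin (s / 2)) (Fin (s - s / 2)) ℚ :=
  Matrix.of fun i j =>
    (F ⟨i.1, lt_of_lt_of_le i.2 (Nat.div_le_self s 2)⟩
       ⟨s / 2 + j.1, by have := j.2; omega⟩ : ℚ)

/-- `r = rank F₂`. -/
def rankF2 {s : ℕ} (F : Matrix (Fin s) (Fin s) ℤ) : ℕ := (F2block F).rank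

/-- Condition L₁ : after a permutation of the variables, `rank F₂ ≥ 5`. -/
def CondL1 {s : ℕ} (F : Matrix (Fin s) (Fin s) ℤ) : Prop :=
  ∃ σ : Equiv.Perm (Fin s), 5 ≤ rankF2 (F.submatrix σ σ)

/-- Condition L₂ with explicit exponent `c` and implicit constant `C`. -/
def CondL2Explicit (a : ℕ → ℝ) (c C : ℝ) : Prop :=
  ∀ X : ℝ, 2 ≤ X →
    ∑ x ∈ Finset.Icc 1 ⌊X⌋₊, (a x) ^ 2 ≤ C * (Asum a X) ^ 2 / X * (Real.log X) ^ c

/-- Condition L₂. -/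
def CondL2 (a : ℕ → ℝ) : Prop :=
  ∃ c C : ℝ, 0 ≤ c ∧ 0 < C ∧ CondL2Explicit a c C

/-- Condition D : `𝒜` is distributed to the level `Q_D`. -/
def CondD (a : ℕ → ℝ) (QD : ℝ → ℝ) (κ : ℕ → ℕ → ℝ) : Prop :=
  Monotone QD ∧ (∀ q h, 0 ≤ κ q h) ∧
    ∀ m : ℕ, ∃ C : ℝ, 0 < C ∧ ∀ X : ℝ, 2 ≤ X → ∀ q : ℕ, 0 < q → (q : ℝ) ≤ QD X →
      ∀ h : ℕ, |AsumMod a q h X - κ q h * Asum a X| ≤ C * Asum a X * (Real.log X) ^ (-(m : ℝ))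

/-- Condition C : multiplicativity of `κ`. -/
def CondC (QD : ℝ → ℝ) (κ : ℕ → ℕ → ℝ) : Prop :=
  ∀ q q' h h' : ℕ, Nat.Coprime q q' → (∃ X : ℝ, ((q * q' : ℕ) : ℝ) < QD X) →
    κ (q * q') (q * h' + q' * h) = κ q (q' * h) * κ q' (q * h')

/-- Condition K : `κ(q,h) ≪ (log q)^c / q`. -/
def CondK (κ : ℕ → ℕ → ℝ) : Prop :=
  ∃ c : ℝ, 0 ≤ c ∧ ∃ C : ℝ, 0 < C ∧ ∀ q : ℕ, 2 ≤ q → ∀ h : ℕ,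
    κ q h ≤ C * (Real.log q) ^ c / q

/-- `Ψ` is a smooth approximation of `A(X)` to order `m`. -/
def IsSmoothApproxOrder (a : ℕ → ℝ) (m : ℕ) (Ψ : ℝ → ℝ) : Prop :=
  ContDiff ℝ (⊤ : ℕ∞) Ψ ∧
    (∃ C : ℝ, 0 < C ∧ ∀ X : ℝ, 2 ≤ X →
      |Ψ X - Asum a X| ≤ C * Asum a X * (Real.log X) ^ (-(m : ℝ))) ∧
    (∃ c₁ c₂ : ℝ, 0 < c₁ ∧ 0 < c₂ ∧ ∀ X : ℝ, 2 ≤ X →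
      c₁ * Asum a X / X ≤ deriv Ψ X ∧ deriv Ψ X ≤ c₂ * Asum a X / X) ∧
    (∀ y z : ℝ, 0 < y → y < z → ∃ C : ℝ, 0 < C ∧ ∀ X : ℝ, 2 ≤ X →
      (∫ u in Set.Ioc (y * X) (z * X), |deriv (deriv Ψ) u|) ≤ C * Asum a X / X)

/-- `A(X)` is smoothly approximable. -/
def SmoothlyApproximable (a : ℕ → ℝ) : Prop :=
  ∀ m : ℕ, ∃ Ψ : ℝ → ℝ, IsSmoothApproxOrder a m Ψ

/-- The weighted exponential sum `S(α) = ∑_{0 ≤ x ≤ X} a_x e(α f(x))`. -/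
def Sexp {s : ℕ} (F : Matrix (Fin s) (Fin s) ℤ) (a : ℕ → ℝ) (α X : ℝ) : ℂ :=
  ∑ x ∈ Fintype.piFinset (fun _ : Fin s => Finset.Icc 0 ⌊X⌋₊),
    (∏ i, (a (x i) : ℂ)) * eC (α * (qf F (fun i => (x i : ℤ)) : ℝ))

/-- The weighted counting function `R_{f,t}(X,𝒜)`. -/
def Rcount {s : ℕ} (F : Matrix (Fin s) (Fin s) ℤ) (t : ℤ) (a : ℕ → ℝ) (X : ℝ) : ℝ :=
  ∑ x ∈ Fintype.piFinset (fun _ : Fin s => Finset.Icc 0 ⌊X⌋₊),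
    if qf F (fun i => (x i : ℤ)) = t then ∏ i, a (x i) else 0

/-- The weighted counting function `R_{f,t}(X,𝒜,𝔅)` on the dilated box `X·[y,z]`. -/
def RcountBox {s : ℕ} (F : Matrix (Fin s) (Fin s) ℤ) (t : ℤ) (a : ℕ → ℝ) (X : ℝ)
    (y z : Fin s → ℝ) : ℝ :=
  ∑ x ∈ Fintype.piFinset (fun i : Fin s => Finset.Icc ⌈X * y i⌉₊ ⌊X * z i⌋₊),
    if qf F (fun i => (x i : ℤ)) = t then ∏ i, a (x i) else 0

/-- `S(q,a) = ∑_{h mod q} κ(q,h) e((a/q) f(h))`. -/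
def Sqa {s : ℕ} (F : Matrix (Fin s) (Fin s) ℤ) (κ : ℕ → ℕ → ℝ) (q aa : ℕ) : ℂ :=
  ∑ h ∈ Fintype.piFinset (fun _ : Fin s => Finset.range q),
    (∏ i, (κ q (h i) : ℂ)) * eC ((aa : ℝ) / q * (qf F (fun i => (h i : ℤ)) : ℝ))

/-- `S_t(q,a) = ∑_{h mod q} κ(q,h) e((a/q)(f(h) - t))`. -/
def Sta {s : ℕ} (F : Matrix (Fin s) (Fin s) ℤ) (t : ℤ) (κ : ℕ → ℕ → ℝ) (q : ℕ) (aa : ℤ) : ℂ :=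
  ∑ h ∈ Fintype.piFinset (fun _ : Fin s => Finset.range q),
    (∏ i, (κ q (h i) : ℂ)) * eC ((aa : ℝ) / q * ((qf F (fun i => (h i : ℤ)) - t : ℤ) : ℝ))

/-- `B(q) = ∑*_{a mod q} S_t(q,a)`. -/
def BqT {s : ℕ} (F : Matrix (Fin s) (Fin s) ℤ) (t : ℤ) (κ : ℕ → ℕ → ℝ) (q : ℕ) : ℂ :=
  ∑ aa ∈ (Finset.Icc 1 q).filter (fun aa => Nat.Coprime aa q), Sta F t κ q (aa : ℤ)

/-- `I(λ,X) = ∫_{[0,X]^s} ψ(u) e(λ f(u)) du`. -/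
def Ilam {s : ℕ} (F : Matrix (Fin s) (Fin s) ℤ) (ψ : ℝ → ℝ) (lam X : ℝ) : ℂ :=
  ∫ u in Set.Icc (0 : Fin s → ℝ) (fun _ => X),
    (∏ i, (ψ (u i) : ℂ)) * eC (lam * qfR F u)

/-- The truncated singular integral `ℑ(X) = ∫_{-P/X²}^{P/X²} I(λ,X) e(-λt) dλ`. -/
def SingInt {s : ℕ} (F : Matrix (Fin s) (Fin s) ℤ) (t : ℤ) (ψ : ℝ → ℝ) (P X : ℝ) : ℂ :=
  ∫ lam in Set.Ioc (-(P / X ^ 2)) (P / X ^ 2), Ilam F ψ lam X * eC (-(lam * (t : ℝ)))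

/-- `ℐ(γ,𝔅,X) = ∫_𝔅 ψ(Xu) e(γ f(u)) du` on the box `𝔅 = [y,z]`. -/
def Igam {s : ℕ} (F : Matrix (Fin s) (Fin s) ℤ) (ψ : ℝ → ℝ) (γ X : ℝ)
    (y z : Fin s → ℝ) : ℂ :=
  ∫ u in Set.Icc y z, (∏ i, (ψ (X * u i) : ℂ)) * eC (γ * qfR F u)

/-- The truncated singular integral on the box,
`ℑ_𝔅(X) = X^{s-2} ∫_{-P}^{P} ℐ(γ,𝔅,X) e(-γ t₀) dγ` with `t₀ = t/X²`. -/
def SingIntBox {s : ℕ} (F : Matrix (Fin s) (Fin s) ℤ) (t : ℤ) (ψ : ℝ → ℝ) (P X : ℝ)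
    (y z : Fin s → ℝ) : ℂ :=
  (X : ℂ) ^ ((s : ℤ) - 2) *
    ∫ γ in Set.Ioc (-P) P, Igam F ψ γ X y z * eC (-(γ * ((t : ℝ) / X ^ 2)))

/-- `𝒥(γ,𝔅) = ∫_𝔅 e(γ f(u)) du`. -/
def Jgam {s : ℕ} (F : Matrix (Fin s) (Fin s) ℤ) (γ : ℝ) (y z : Fin s → ℝ) : ℂ :=
  ∫ u in Set.Icc y z, eC (γ * qfR F u)

/-- The linear forms `g_j(z)` (the coefficient of `y_j` in the mixed part of `f`). -/
def gform {s : ℕ} (F : Matrix (Fin s) (Fin s) ℤ) (j : Fin (s / 2))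
    (v : Fin (s - s / 2) → ℤ) : ℤ :=
  2 * ∑ k : Fin (s - s / 2),
    F ⟨j.1, lt_of_lt_of_le j.2 (Nat.div_le_self s 2)⟩ ⟨s / 2 + k.1, by have := k.2; omega⟩ * v k

/-- The linear forms `h_j(y)` (the coefficient of `z_j` in the mixed part of `f`). -/
def hform {s : ℕ} (F : Matrix (Fin s) (Fin s) ℤ) (j : Fin (s - s / 2))
    (v : Fin (s / 2) → ℤ) : ℤ :=
  2 * ∑ k : Fin (s / 2),
    F ⟨s / 2 + j.1, by have := j.2; omega⟩ ⟨k.1, lt_of_lt_of_le k.2 (Nat.div_le_self s 2)⟩ * v k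

/-- The combined linear forms `H_j(x)`: `H_j(x) = g_j(z)` for `j ≤ n`,
`H_j(x) = h_{j-n}(y)` for `j > n`. -/
def Hform {s : ℕ} (F : Matrix (Fin s) (Fin s) ℤ) (x : Fin s → ℤ) (j : Fin s) : ℤ :=
  if h : j.1 < s / 2 then
    gform F ⟨j.1, h⟩ (fun k => x ⟨s / 2 + k.1, by have := k.2; omega⟩)
  else
    hform F ⟨j.1 - s / 2, by have := j.2; omega⟩
      (fun k => x ⟨k.1, lt_of_lt_of_le k.2 (Nat.div_le_self s 2)⟩)

/-- `‖x‖`, the distance from `x` to the nearest integer. -/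
def distNearInt (x : ℝ) : ℝ := |x - round x|

/-- `min(X, 1/t)`, interpreted as `X` when `t = 0`. -/
def minXval (X t : ℝ) : ℝ := if t = 0 then X else min X (1 / t)

/-- `μ(X)`: the number of `x ∈ ℤ^s` with `|x| ≤ X` and `‖α H_j(x)‖ ≤ 1/X` for all `j`. -/
def muX {s : ℕ} (F : Matrix (Fin s) (Fin s) ℤ) (α X : ℝ) : ℕ :=
  ((Fintype.piFinset (fun _ : Fin s => Finset.Icc (-⌊X⌋) ⌊X⌋)).filter
    (fun x => ∀ j : Fin s, distNearInt (α * (Hform F x j : ℝ)) ≤ 1 / X)).card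

/-- `μ(ρ,X)`: the number of `x ∈ ℤ^s` with `|x| ≤ ρX` and `‖α H_j(x)‖ ≤ ρ/X` for all `j`. -/
def muRho {s : ℕ} (F : Matrix (Fin s) (Fin s) ℤ) (α ρ X : ℝ) : ℕ :=
  ((Fintype.piFinset (fun _ : Fin s => Finset.Icc (-⌊ρ * X⌋) ⌊ρ * X⌋)).filter
    (fun x => ∀ j : Fin s, distNearInt (α * (Hform F x j : ℝ)) ≤ ρ / X)).card

/-- `‖f‖`, the maximal absolute value of the entries of `F`. -/
def Fmax {s : ℕ} (F : Matrix (Fin s) (Fin s) ℤ) : ℝ :=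
  ((Finset.univ.sup fun p : Fin s × Fin s => (F p.1 p.2).natAbs : ℕ) : ℝ)

/-- The major arcs `𝔐` (with `P` and `Q = X²/P`, so `1/(qQ) = P/(qX²)`). -/
def majorArcs (P X : ℝ) : Set ℝ :=
  ⋃ q ∈ Finset.Icc 1 ⌊P⌋₊, ⋃ aa ∈ (Finset.Icc 1 q).filter (fun aa => Nat.Coprime aa q),
    Set.Icc ((aa : ℝ) / q - P / (q * X ^ 2)) ((aa : ℝ) / q + P / (q * X ^ 2))

/-- The minor arcs `𝔪 = [0,1] ∖ 𝔐`. -/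
def minorArcs (P X : ℝ) : Set ℝ := Set.Icc 0 1 \ majorArcs P X

/-- `M(Q)`: the `κ`-weighted number of solutions of `f(x) ≡ t (mod Q)`. -/
def Mcount {s : ℕ} (F : Matrix (Fin s) (Fin s) ℤ) (t : ℤ) (κ : ℕ → ℕ → ℝ) (Q : ℕ) : ℝ :=
  ∑ h ∈ Fintype.piFinset (fun _ : Fin s => Finset.range Q),
    if (Q : ℤ) ∣ (qf F (fun i => (h i : ℤ)) - t) then ∏ i, κ Q (h i) else 0

/-- The indicator sequence of the primes. -/
def aPrime : ℕ → ℝ := fun x => if Nat.Prime x then 1 else 0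

/-- The weights `κ(q,a)` for the primes: `1/φ(q)` if `gcd(a,q)=1`, and `0` otherwise. -/
def kappaPrime : ℕ → ℕ → ℝ := fun q aa =>
  if Nat.gcd aa q = 1 then ((Nat.totient q : ℝ))⁻¹ else 0

/-- The indicator sequence of the `k`-free numbers. -/
def aKfree (k : ℕ) : ℕ → ℝ := fun x => if ∀ p : ℕ, p.Prime → ¬ p ^ k ∣ x then 1 else 0

/-- The weights `κ(q,a)` for the `k`-free numbers. -/
def kappaKfree (k : ℕ) : ℕ → ℕ → ℝ := fun q aa =>
  if ∃ p : ℕ, p.Prime ∧ p ^ k ∣ Nat.gcd q aa then 0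
  else (q : ℝ)⁻¹ * ∏ p ∈ q.primeFactors,
    ((1 - (p : ℝ) ^ (-(k : ℤ)))⁻¹ *
      (if p ∣ q / Nat.gcd q aa then 1 else 1 - (p : ℝ) ^ ((q.factorization p : ℤ) - (k : ℤ))))

/-- `ζ(k)` as a real series. -/
def zetaR (k : ℕ) : ℝ := ∑' n : ℕ, ((n : ℝ) + 1) ^ (-(k : ℤ))

/-- Condition B. -/
def CondB {s : ℕ} (F : Matrix (Fin s) (Fin s) ℤ) (t : ℤ) (k : ℕ) : Prop :=
  ∀ p : ℕ, p.Prime → (p : ℤ) ∣ 2 * F.det → ∃ x : Fin s → ℤ,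
    (2 * F.det) ^ (2 * k - 1) ∣ (qf F x - t) ∧ ∀ i, ¬ ((p : ℤ) ^ k ∣ x i)


lemma aux_eC_add (x y : ℝ) : eC (x + y) = eC x * eC y := by
  unfold eC
  rw [← Complex.exp_add]
  congr 1
  push_cast
  ring

lemma aux_eC_zero : eC 0 = 1 := by simp [eC]

lemma aux_eC_eq_one_iff (x : ℝ) : eC x = 1 ↔ ∃ n : ℤ, x = n := by
  unfold eC
  rw [Complex.exp_eq_one_iff]
  have hne : (2 * (Real.pi : ℂ) * Complex.I) ≠ 0 := Complex.two_pi_I_ne_zero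
  constructor
  · rintro ⟨n, hn⟩
    refine ⟨n, ?_⟩
    rw [mul_comm (n : ℂ)] at hn
    have := mul_left_cancel₀ hne hn
    exact_mod_cast this
  · rintro ⟨n, rfl⟩
    exact ⟨n, by push_cast; ring⟩

lemma aux_eC_sum {ι : Type*} (t : Finset ι) (f : ι → ℝ) :
    eC (∑ i ∈ t, f i) = ∏ i ∈ t, eC (f i) := by
  induction t using Finset.induction_on with
  | empty => simp [aux_eC_zero]
  | insert a t ha ih => rw [Finset.sum_insert ha, Finset.prod_insert ha, aux_eC_add, ih]

lemma aux_eC_norm (x : ℝ) : ‖eC x‖ = 1 := by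
  unfold eC
  have : (2 * (Real.pi : ℂ) * Complex.I * (x : ℂ)) = ((2 * Real.pi * x : ℝ) : ℂ) * Complex.I := by
    push_cast; ring
  rw [this, Complex.norm_exp_ofReal_mul_I]

lemma aux_eC_conj (x : ℝ) : (starRingEnd ℂ) (eC x) = eC (-x) := by
  unfold eC
  rw [← Complex.exp_conj]
  congr 1
  simp [map_ofNat]

lemma aux_eC_nat_mul (x : ℝ) (n : ℕ) : eC (x * n) = eC x ^ n := by
  induction n with
  | zero => simp [aux_eC_zero]
  | succ n ih => rw [pow_succ, ← ih, ← aux_eC_add]; congr 1; push_cast; ring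

/-- if the arguments differ by an integer, values of `eC` agree -/
lemma aux_eC_congr (x y : ℝ) (n : ℤ) (h : x = y + n) : eC x = eC y := by
  rw [h, aux_eC_add, (aux_eC_eq_one_iff _).2 ⟨n, rfl⟩, mul_one]

lemma aux_orth (q : ℕ) (hq : 0 < q) (b : ℤ) :
    ∑ x ∈ Finset.range q, eC ((b : ℝ) / q * x) = if (q : ℤ) ∣ b then (q : ℂ) else 0 := by
  have hq' : (q : ℝ) ≠ 0 := by positivity
  simp_rw [aux_eC_nat_mul]
  have h1 : eC ((b : ℝ) / q) = 1 ↔ (q : ℤ) ∣ b := by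
    rw [aux_eC_eq_one_iff]
    constructor
    · rintro ⟨n, hn⟩
      refine ⟨n, ?_⟩
      rw [div_eq_iff hq'] at hn
      rw [mul_comm]
      exact_mod_cast hn
    · rintro ⟨n, rfl⟩
      exact ⟨n, by push_cast; field_simp⟩
  split_ifs with h
  · rw [h1.2 h]; simp
  · have hne : eC ((b : ℝ) / q) ≠ 1 := fun h' => h (h1.1 h')
    have := mul_geom_sum (eC ((b : ℝ) / q)) q
    rw [← aux_eC_nat_mul, div_mul_cancel₀ _ hq', (aux_eC_eq_one_iff _).2 ⟨b, rfl⟩, sub_self] at this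
    rcases mul_eq_zero.1 this with h' | h'
    · exact absurd (sub_eq_zero.1 h') hne
    · exact h'

lemma aux_orth_Icc (q : ℕ) (hq : 0 < q) (b : ℤ) :
    ∑ x ∈ Finset.Icc 1 q, eC ((x : ℝ) / q * b) = if (q : ℤ) ∣ b then (q : ℂ) else 0 := by
  rw [← aux_orth q hq b, Finset.range_eq_Ico, ← Finset.Ico_succ_right_eq_Icc]
  have hq' : (q : ℝ) ≠ 0 := by positivity
  rw [Finset.sum_eq_sum_Ico_succ_bot hq]
  have : (Order.succ q) = q + 1 := rfl
  rw [this, Finset.sum_Ico_succ_top (by omega), add_comm]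
  congr 1
  · rw [show ((q : ℕ) : ℝ) / q * b = b by field_simp, (aux_eC_eq_one_iff _).2 ⟨b, rfl⟩]
    simp [aux_eC_zero]
  · refine Finset.sum_congr rfl fun x _ => ?_
    congr 1; ring

lemma aux_qf_mod {s : ℕ} (F : Matrix (Fin s) (Fin s) ℤ) (q : ℤ) (x y : Fin s → ℤ)
    (h : ∀ i, x i ≡ y i [ZMOD q]) : qf F x ≡ qf F y [ZMOD q] := by
  unfold qf
  refine Int.ModEq.sum fun i _ => Int.ModEq.sum fun j _ => ?_
  exact ((Int.ModEq.refl _).mul (h i)).mul (h j)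

lemma aux_Sta_lift {s : ℕ} (F : Matrix (Fin s) (Fin s) ℤ) (t : ℤ) (κ : ℕ → ℕ → ℝ)
    (hκcompat : ∀ q q' : ℕ, 0 < q → 0 < q' → ∀ h : ℕ,
      κ q h = ∑ b ∈ Finset.range (q * q'), if b % q = h % q then κ (q * q') b else 0)
    (q q' : ℕ) (hq : 0 < q) (hq' : 0 < q') (b : ℤ) :
    Sta F t κ (q * q') (q' * b) = Sta F t κ q b := by
  have hqR : (q : ℝ) ≠ 0 := by positivity
  have hqR' : (q' : ℝ) ≠ 0 := by positivity
  unfold Sta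
  symm
  have step : ∀ g ∈ Fintype.piFinset (fun _ : Fin s => Finset.range q),
      (∏ i, (κ q (g i) : ℂ)) * eC ((b : ℝ) / q * ((qf F (fun i => (g i : ℤ)) - t : ℤ) : ℝ))
      = ∑ h ∈ Fintype.piFinset (fun _ : Fin s => Finset.range (q * q')),
        (∏ i, (if h i % q = g i % q then (κ (q * q') (h i) : ℂ) else 0)) *
          eC ((b : ℝ) / q * ((qf F (fun i => (g i : ℤ)) - t : ℤ) : ℝ)) := by
    intro g _
    rw [← Finset.sum_mul]
    congr 1
    rw [← Finset.prod_univ_sum (fun _ : Fin s => Finset.range (q * q'))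
      (fun i x => if x % q = g i % q then (κ (q * q') x : ℂ) else 0)]
    refine Finset.prod_congr rfl fun i _ => ?_
    rw [hκcompat q q' hq hq' (g i)]
    push_cast
    refine Finset.sum_congr rfl fun x _ => ?_
    split_ifs <;> simp
  rw [Finset.sum_congr rfl step, Finset.sum_comm]
  refine Finset.sum_congr rfl fun h hh => ?_
  rw [Finset.sum_eq_single (fun i => h i % q)]
  · congr 1
    · refine Finset.prod_congr rfl fun i _ => ?_
      simp
    · have hm := aux_qf_mod F q (fun i => (h i : ℤ)) (fun i => ((h i % q : ℕ) : ℤ))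
        (fun i => by push_cast; exact (Int.mod_modEq _ _).symm)
      obtain ⟨n, hn⟩ := hm.symm.dvd
      symm
      apply aux_eC_congr _ _ (b * n)
      have hn' : qf F (fun i => (h i : ℤ)) = qf F (fun i => ((h i % q : ℕ) : ℤ)) + q * n := by
        linarith
      rw [hn']
      push_cast
      field_simp
      ring
  · intro g hg hne
    have : ∃ i, h i % q ≠ g i % q := by
      by_contra hcon
      push Not at hcon
      apply hne
      funext i
      rw [hcon i, Nat.mod_eq_of_lt]
      simpa using (Fintype.mem_piFinset.1 hg i)
    obtain ⟨i, hi⟩ := this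
    rw [Finset.prod_eq_zero (Finset.mem_univ i) (by rw [if_neg hi]), zero_mul]
  · intro hcon
    exfalso
    apply hcon
    rw [Fintype.mem_piFinset]
    intro i
    exact Finset.mem_range.2 (Nat.mod_lt _ hq)

lemma aux_total {s : ℕ} (F : Matrix (Fin s) (Fin s) ℤ) (t : ℤ) (κ : ℕ → ℕ → ℝ)
    (q : ℕ) (hq : 0 < q) :
    ∑ x ∈ Finset.Icc 1 q, Sta F t κ q (x : ℤ) = (((q : ℝ) * Mcount F t κ q : ℝ) : ℂ) := by
  unfold Sta Mcount
  rw [Finset.sum_comm]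
  push_cast
  rw [Finset.mul_sum]
  refine Finset.sum_congr rfl fun h _ => ?_
  rw [← Finset.mul_sum]
  have := aux_orth_Icc q hq (qf F (fun i => (h i : ℤ)) - t)
  push_cast at this
  rw [this]
  split_ifs with h1
  · push_cast; ring
  · simp

lemma aux_partial {s : ℕ} (F : Matrix (Fin s) (Fin s) ℤ) (t : ℤ) (κ : ℕ → ℕ → ℝ)
    (hκcompat : ∀ q q' : ℕ, 0 < q → 0 < q' → ∀ h : ℕ,
      κ q h = ∑ b ∈ Finset.range (q * q'), if b % q = h % q then κ (q * q') b else 0)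
    (p : ℕ) (hp : p.Prime) (m : ℕ) :
    (((p : ℝ) ^ m * Mcount F t κ (p ^ m) : ℝ) : ℂ)
      = ∑ k ∈ Finset.range (m + 1), BqT F t κ (p ^ k) := by
  have key : ∀ m : ℕ, ∑ x ∈ Finset.Icc 1 (p ^ m), Sta F t κ (p ^ m) (x : ℤ)
      = ∑ k ∈ Finset.range (m + 1), BqT F t κ (p ^ k) := by
    intro m
    induction m with
    | zero => simp [BqT, Finset.filter_true_of_mem]
    | succ m ih =>
      rw [Finset.sum_range_succ, ← ih,
        ← Finset.sum_filter_add_sum_filter_not _ (fun x => Nat.Coprime x (p ^ (m + 1))), add_comm]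
      congr 1
      symm
      refine Finset.sum_bij (fun x _ => p * x) ?_ ?_ ?_ ?_
      · intro x hx
        rw [Finset.mem_Icc] at hx
        rw [Finset.mem_filter, Finset.mem_Icc]
        refine ⟨⟨Nat.mul_pos hp.pos hx.1, ?_⟩, ?_⟩
        · rw [pow_succ, mul_comm]; exact Nat.mul_le_mul_right _ hx.2
        · rw [Nat.coprime_pow_right_iff (Nat.succ_pos m)]
          intro hc
          exact hp.one_lt.ne' (Nat.Coprime.eq_one_of_dvd hc.symm (Dvd.intro _ rfl))
      · intro x _ y _ hxy
        exact Nat.eq_of_mul_eq_mul_left hp.pos hxy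
      · intro y hy
        rw [Finset.mem_filter, Finset.mem_Icc, Nat.coprime_pow_right_iff (Nat.succ_pos m),
          Nat.coprime_comm, hp.coprime_iff_not_dvd, not_not] at hy
        obtain ⟨⟨h1, h2⟩, x, rfl⟩ := hy
        refine ⟨x, ?_, rfl⟩
        rw [Finset.mem_Icc]
        constructor
        · exact Nat.pos_of_mul_pos_left h1
        · rw [pow_succ, mul_comm] at h2
          exact Nat.le_of_mul_le_mul_right h2 hp.pos
      · intro x _
        have := aux_Sta_lift F t κ hκcompat (p ^ m) p (pow_pos hp.pos m) hp.pos x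
        rw [← this, pow_succ]
        push_cast
        rfl
  rw [← key, aux_total F t κ _ (pow_pos hp.pos m)]
  push_cast
  rfl

lemma aux_extract {s : ℕ} (F : Matrix (Fin s) (Fin s) ℤ) (hL1 : CondL1 F) :
    ∃ (J : Finset (Fin s)) (N : ℤ) (L : Fin s → Fin s → ℤ), J.card = 5 ∧ N ≠ 0 ∧
      ∀ j ∈ J, ∀ j' ∈ J, ∑ i ∈ Jᶜ, L j i * F i j' = if j = j' then N else 0 := by
  obtain ⟨σ, hσ⟩ := hL1
  set A := F2block (F.submatrix σ σ) with hA
  unfold rankF2 at hσ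
  rw [← hA, Matrix.rank_eq_finrank_span_cols] at hσ
  obtain ⟨f, hf1, -, hf3⟩ := Submodule.exists_fun_fin_finrank_span_eq ℚ (Set.range A.col)
  choose c hc using hf1
  -- five independent columns
  let d : Fin 5 → Fin (s - s / 2) := fun k => c (Fin.castLE hσ k)
  have hli : LinearIndependent ℚ (fun k : Fin 5 => A.col (d k)) := by
    have := hf3.comp (Fin.castLE hσ) (Fin.castLE_injective hσ)
    have he : (fun k : Fin 5 => A.col (d k)) = f ∘ Fin.castLE hσ := funext fun k => hc _
    rw [he]
    exact this
  have hdinj : Function.Injective d := fun x y hxy => hli.injective (by simp only [hxy])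
  -- dual functionals
  let T : (Fin 5 → ℚ) →ₗ[ℚ] (Fin (s / 2) → ℚ) := Fintype.linearCombination ℚ (fun k => A.col (d k))
  have hT : LinearMap.ker T = ⊥ := by
    rw [LinearMap.ker_eq_bot']
    intro m hm
    exact funext (Fintype.linearIndependent_iff.1 hli m hm)
  obtain ⟨g, hg⟩ := T.exists_leftInverse_of_injective hT
  have hTs : ∀ k, T (Pi.single k 1) = A.col (d k) := by
    intro k
    simp [T, Fintype.linearCombination_apply_single]
  have hgs : ∀ k l, g (A.col (d k)) l = if k = l then 1 else 0 := by
    intro k l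
    rw [← hTs, ← LinearMap.comp_apply, hg]
    simp [Pi.single_apply, eq_comm]
  have hgm : ∀ v l, g v l = ∑ i, v i * g (Pi.single i 1) l := by
    intro v l
    conv_lhs => rw [pi_eq_sum_univ' v]
    simp [Finset.sum_apply]
  obtain ⟨b, hb⟩ := IsLocalization.exist_integer_multiples_of_finite (nonZeroDivisors ℤ)
    (fun x : Fin 5 × Fin (s / 2) => g (Pi.single x.2 1) x.1)
  choose Λ hΛ using hb
  have hb0 : (b : ℤ) ≠ 0 := nonZeroDivisors.ne_zero b.2
  let ro : Fin (s / 2) → Fin s := fun i => σ ⟨i.1, lt_of_lt_of_le i.2 (Nat.div_le_self s 2)⟩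
  let co : Fin 5 → Fin s := fun k => σ ⟨s / 2 + (d k).1, by have := (d k).2; omega⟩
  have hro : Function.Injective ro := by
    intro x y hxy
    have := σ.injective hxy
    simpa [Fin.ext_iff] using this
  have hco : Function.Injective co := by
    intro x y hxy
    have := σ.injective hxy
    apply hdinj
    simpa [Fin.ext_iff] using this
  have hdisj : ∀ i k, ro i ≠ co k := by
    intro i k h
    have := σ.injective h
    have h2 := i.2
    simp only [Fin.mk.injEq] at this
    omega
  have hAF : ∀ i k, A i (d k) = (F (ro i) (co k) : ℚ) := by
    intro i k
    rfl
  have main : ∀ k l, ∑ i, Λ (k, i) * F (ro i) (co l) = if k = l then (b : ℤ) else 0 := by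
    intro k l
    have h1 := hgs l k
    rw [hgm] at h1
    have h2 : ((∑ i, Λ (k, i) * F (ro i) (co l) : ℤ) : ℚ) = (b : ℤ) * (if l = k then 1 else 0) := by
      rw [← h1, Finset.mul_sum]
      push_cast
      refine Finset.sum_congr rfl fun i _ => ?_
      have h3 := hΛ (k, i)
      simp only [zsmul_eq_mul] at h3
      have h4 : (Λ (k, i) : ℚ) = (b : ℤ) * g (Pi.single i 1) k := by
        rw [← h3]; rfl
      have h5 : A.col (d l) i = (F (ro i) (co l) : ℚ) := hAF i l
      rw [h4, h5]
      ring
    split_ifs with h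
    · subst h
      simp only [if_true, mul_one] at h2
      exact_mod_cast h2
    · rw [if_neg (fun h' => h h'.symm), mul_zero] at h2
      exact_mod_cast h2
  refine ⟨Finset.univ.image co, b, fun j i => ∑ k, ∑ i', if co k = j ∧ ro i' = i then Λ (k, i') else 0,
    ?_, hb0, ?_⟩
  · rw [Finset.card_image_of_injective _ hco]; simp
  · intro j hj j' hj'
    simp only [Finset.mem_image, Finset.mem_univ, true_and] at hj hj'
    obtain ⟨k, rfl⟩ := hj
    obtain ⟨l, rfl⟩ := hj'
    have hL : ∀ i, (∑ k', ∑ i', if co k' = co k ∧ ro i' = i then Λ (k', i') else 0)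
        = ∑ i', if ro i' = i then Λ (k, i') else 0 := by
      intro i
      rw [Finset.sum_eq_single k]
      · simp
      · intro k' _ hne
        refine Finset.sum_eq_zero fun i' _ => ?_
        rw [if_neg]
        rintro ⟨h, -⟩
        exact hne (hco h)
      · simp
    simp only [hL]
    simp only [hco.eq_iff]
    rw [← main k l]
    simp_rw [Finset.sum_mul]
    rw [Finset.sum_comm]
    refine Finset.sum_congr rfl fun i' _ => ?_
    rw [Finset.sum_eq_single (ro i')]
    · simp
    · intro i _ hne
      rw [if_neg hne.symm, zero_mul]
    · intro h
      exfalso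
      apply h
      simp only [Finset.mem_compl, Finset.mem_image, Finset.mem_univ, true_and, not_exists]
      exact fun k h => hdisj i' k h.symm

/-- Cauchy–Schwarz step. -/
lemma aux_core {Y Z : Type*} [Fintype Y] [Fintype Z] (wY : Y → ℝ) (wZ : Z → ℝ)
    (hY0 : ∀ y, 0 ≤ wY y) (hZ0 : ∀ z, 0 ≤ wZ z) (hY1 : ∑ y, wY y = 1) (hZ1 : ∑ z, wZ z = 1)
    (A M : ℝ) (hA0 : 0 ≤ A) (hA : ∀ y, wY y ≤ A) (φ : Y → Z → ℂ) (E : Z → Z → ℝ)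
    (hE : ∀ z z', ‖∑ y, φ y z * (starRingEnd ℂ) (φ y z')‖ ≤ E z z')
    (hM : ∀ z', ∑ z, wZ z * E z z' ≤ M) :
    ‖∑ y, ∑ z, (wY y : ℂ) * (wZ z : ℂ) * φ y z‖ ^ 2 ≤ A * M := by
  set G : Y → ℂ := fun y => ∑ z, (wZ z : ℂ) * φ y z with hG
  have h1 : ‖∑ y, ∑ z, (wY y : ℂ) * (wZ z : ℂ) * φ y z‖ ≤ ∑ y, wY y * ‖G y‖ := by
    refine (norm_sum_le _ _).trans (Finset.sum_le_sum fun y _ => ?_)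
    simp_rw [mul_assoc]
    rw [← Finset.mul_sum, norm_mul, Complex.norm_real, Real.norm_of_nonneg (hY0 y)]
  have h2 : (∑ y, wY y * ‖G y‖) ^ 2 ≤ ∑ y, wY y * ‖G y‖ ^ 2 :=
    Real.pow_arith_mean_le_arith_mean_pow _ _ _ (fun y _ => hY0 y) hY1 (fun y _ => norm_nonneg _) 2
  have h3 : ∑ y, wY y * ‖G y‖ ^ 2 ≤ A * ∑ y, ‖G y‖ ^ 2 := by
    rw [Finset.mul_sum]
    exact Finset.sum_le_sum fun y _ => mul_le_mul_of_nonneg_right (hA y) (by positivity)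
  have h4 : ((∑ y, ‖G y‖ ^ 2 : ℝ) : ℂ)
      = ∑ z', (wZ z' : ℂ) * ∑ z, (wZ z : ℂ) * ∑ y, φ y z * (starRingEnd ℂ) (φ y z') := by
    push_cast
    simp_rw [← Complex.mul_conj', hG, map_sum, map_mul, Complex.conj_ofReal, Finset.mul_sum,
      Finset.sum_mul]
    rw [Finset.sum_comm]
    refine Finset.sum_congr rfl fun z' _ => ?_
    rw [Finset.sum_comm]
    refine Finset.sum_congr rfl fun z _ => Finset.sum_congr rfl fun y _ => ?_
    ring
  have h5 : ∑ y, ‖G y‖ ^ 2 ≤ M := by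
    have h0 : 0 ≤ ∑ y, ‖G y‖ ^ 2 := Finset.sum_nonneg fun y _ => by positivity
    have : ∑ y, ‖G y‖ ^ 2 = ‖((∑ y, ‖G y‖ ^ 2 : ℝ) : ℂ)‖ := by
      rw [Complex.norm_real, Real.norm_of_nonneg h0]
    rw [this, h4]
    calc _ ≤ ∑ z', wZ z' * M := by
          refine (norm_sum_le _ _).trans (Finset.sum_le_sum fun z' _ => ?_)
          rw [norm_mul, Complex.norm_real, Real.norm_of_nonneg (hZ0 z')]
          refine mul_le_mul_of_nonneg_left (le_trans ?_ (hM z')) (hZ0 z')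
          refine (norm_sum_le _ _).trans (Finset.sum_le_sum fun z _ => ?_)
          rw [norm_mul, Complex.norm_real, Real.norm_of_nonneg (hZ0 z)]
          exact mul_le_mul_of_nonneg_left (hE z z') (hZ0 z)
      _ = M := by rw [← Finset.sum_mul, hZ1, one_mul]
  calc _ ≤ (∑ y, wY y * ‖G y‖) ^ 2 := by gcongr
    _ ≤ _ := h2.trans (h3.trans (mul_le_mul_of_nonneg_left h5 hA0))

lemma aux_count (q : ℕ) (hq : 0 < q) (N : ℤ) (hN : N ≠ 0) (x' : Fin q) :
    ((Finset.univ : Finset (Fin q)).filter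
      (fun x : Fin q => (q : ℤ) ∣ N * (((x : ℕ) : ℤ) - ((x' : ℕ) : ℤ)))).card ≤ 2 * N.natAbs := by
  have hq' : (0 : ℤ) < q := by exact_mod_cast hq
  have : ((Finset.univ : Finset (Fin q)).filter
      (fun x : Fin q => (q : ℤ) ∣ N * (((x : ℕ) : ℤ) - ((x' : ℕ) : ℤ)))).card ≤
      (Finset.Ico (-|N|) |N|).card := by
    refine Finset.card_le_card_of_injOn (fun x : Fin q => N * (((x : ℕ) : ℤ) - ((x' : ℕ) : ℤ)) / q) ?_ ?_
    · intro x hx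
      simp only [Finset.coe_filter, Finset.mem_univ, true_and, Set.mem_ofPred_eq] at hx
      obtain ⟨c, hc⟩ := hx
      simp only [Finset.coe_Ico, Set.mem_Ico]
      rw [hc, Int.mul_ediv_cancel_left _ hq'.ne']
      have h1 : |(((x : ℕ) : ℤ) - ((x' : ℕ) : ℤ))| < q := by
        have := x.2
        have := x'.2
        rw [abs_lt]; constructor <;> omega
      have h2 : (q : ℤ) * |c| < q * |N| := by
        have : (q : ℤ) * |c| = |N| * |(((x : ℕ) : ℤ) - ((x' : ℕ) : ℤ))| := by
          rw [← abs_mul, hc, abs_mul, abs_of_pos hq']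
        rw [this, mul_comm]
        exact mul_lt_mul_of_pos_right h1 (abs_pos.2 hN)
      have h3 := lt_of_mul_lt_mul_left h2 hq'.le
      rw [abs_lt] at h3
      exact ⟨h3.1.le, h3.2⟩
    · intro x hx y hy hxy
      simp only [Finset.coe_filter, Finset.mem_univ, true_and, Set.mem_ofPred_eq] at hx hy
      obtain ⟨c, hc⟩ := hx
      obtain ⟨d, hd⟩ := hy
      simp only [hc, hd] at hxy
      rw [Int.mul_ediv_cancel_left _ hq'.ne', Int.mul_ediv_cancel_left _ hq'.ne'] at hxy
      rw [hxy, ← hd] at hc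
      have := mul_left_cancel₀ hN hc
      apply Fin.ext
      omega
  refine this.trans (le_of_eq ?_)
  rw [Int.card_Ico, Int.abs_eq_natAbs]
  omega

lemma aux_pi_sum {s : ℕ} {M : Type*} [AddCommMonoid M] (q : ℕ) (g : (Fin s → ℕ) → M) :
    ∑ h ∈ Fintype.piFinset (fun _ : Fin s => Finset.range q), g h
      = ∑ h : Fin s → Fin q, g (fun i => (h i : ℕ)) := by
  symm
  refine Finset.sum_bij (fun h _ => fun i => (h i : ℕ)) ?_ ?_ ?_ ?_
  · intro h _
    rw [Fintype.mem_piFinset]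
    intro i
    exact Finset.mem_range.2 (h i).2
  · intro x _ y _ hxy
    funext i
    exact Fin.ext (congrFun hxy i)
  · intro h hh
    rw [Fintype.mem_piFinset] at hh
    exact ⟨fun i => ⟨h i, Finset.mem_range.1 (hh i)⟩, Finset.mem_univ _, rfl⟩
  · intro h _; rfl

/-- Difference of the quadratic form at two points that agree off `J`. -/
lemma aux_qf_diff {s : ℕ} (F : Matrix (Fin s) (Fin s) ℤ) (hF : F.IsSymm) (J : Finset (Fin s))
    (x x' : Fin s → ℤ) (h : ∀ i ∉ J, x i = x' i) :
    qf F x - qf F x' = (∑ i ∈ J, ∑ j ∈ J, F i j * (x i * x j - x' i * x' j))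
      + ∑ i ∈ Jᶜ, x i * (2 * ∑ j ∈ J, F i j * (x j - x' j)) := by
  have key : ∀ x : Fin s → ℤ, qf F x = (∑ i ∈ J, ∑ j ∈ J, F i j * x i * x j)
      + (∑ i ∈ Jᶜ, x i * (2 * ∑ j ∈ J, F i j * x j))
      + ∑ i ∈ Jᶜ, ∑ j ∈ Jᶜ, F i j * x i * x j := by
    intro x
    have h1 : ∑ i ∈ J, ∑ j ∈ Jᶜ, F i j * x i * x j = ∑ i ∈ Jᶜ, ∑ j ∈ J, F i j * x i * x j := by
      rw [Finset.sum_comm]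
      refine Finset.sum_congr rfl fun i _ => Finset.sum_congr rfl fun j _ => ?_
      rw [hF.apply]
      ring
    have h2 : ∑ i ∈ Jᶜ, x i * (2 * ∑ j ∈ J, F i j * x j)
        = 2 * ∑ i ∈ Jᶜ, ∑ j ∈ J, F i j * x i * x j := by
      rw [Finset.mul_sum]
      refine Finset.sum_congr rfl fun i _ => ?_
      rw [Finset.mul_sum, Finset.mul_sum, Finset.mul_sum]
      refine Finset.sum_congr rfl fun j _ => ?_
      ring
    unfold qf
    rw [← Finset.sum_add_sum_compl J]
    simp_rw [← Finset.sum_add_sum_compl J (fun j => F _ j * x _ * x j)]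
    rw [Finset.sum_add_distrib, Finset.sum_add_distrib, h1, h2]
    ring
  rw [key x, key x']
  have e1 : ∑ i ∈ Jᶜ, ∑ j ∈ Jᶜ, F i j * x' i * x' j = ∑ i ∈ Jᶜ, ∑ j ∈ Jᶜ, F i j * x i * x j := by
    refine Finset.sum_congr rfl fun i hi => Finset.sum_congr rfl fun j hj => ?_
    rw [h i (Finset.mem_compl.1 hi), h j (Finset.mem_compl.1 hj)]
  have e2 : ∑ i ∈ Jᶜ, x' i * (2 * ∑ j ∈ J, F i j * x' j)
      = ∑ i ∈ Jᶜ, x i * (2 * ∑ j ∈ J, F i j * x' j) := by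
    refine Finset.sum_congr rfl fun i hi => ?_
    rw [h i (Finset.mem_compl.1 hi)]
  rw [e1, e2]
  simp_rw [mul_sub, Finset.sum_sub_distrib]
  simp_rw [mul_sub, Finset.sum_sub_distrib, mul_assoc]
  ring

set_option maxHeartbeats 2000000 in
lemma aux_Sta_bound {s : ℕ} (F : Matrix (Fin s) (Fin s) ℤ) (hF : F.IsSymm) (t : ℤ)
    (κ : ℕ → ℕ → ℝ) (hκ0 : ∀ q h, 0 ≤ κ q h)
    (hκsum : ∀ q : ℕ, 0 < q → ∑ h ∈ Finset.range q, κ q h = 1)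
    (J : Finset (Fin s)) (N : ℤ) (L : Fin s → Fin s → ℤ) (hJ : J.card = 5) (hN : N ≠ 0)
    (hL : ∀ j ∈ J, ∀ j' ∈ J, ∑ i ∈ Jᶜ, L j i * F i j' = if j = j' then N else 0)
    (q : ℕ) (hq : 0 < q) (K : ℝ) (hK0 : 0 ≤ K) (hK : ∀ h, κ q h ≤ K / q)
    (b : ℤ) (hb : IsCoprime (q : ℤ) b) :
    ‖Sta F t κ q b‖ ^ 2 ≤ K ^ (s - 5) * (4 * |(N : ℝ)| * K / q) ^ 5 := by
  have hqR : (0 : ℝ) < q := by exact_mod_cast hq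
  have hcardY : Fintype.card {i // i ∉ J} = s - 5 := by
    rw [Fintype.card_subtype_compl]; simp [hJ]
  have hcardZ : Fintype.card {i // i ∈ J} = 5 := by simp [hJ]
  have hsum1 : ∑ x : Fin q, κ q x = 1 := by
    rw [← hκsum q hq, Finset.sum_range]
  let e := Equiv.piEquivPiSubtypeProd (fun i => i ∈ J) (fun _ : Fin s => Fin q)
  let wY : ({i // i ∉ J} → Fin q) → ℝ := fun y => ∏ i, κ q (y i)
  let wZ : ({i // i ∈ J} → Fin q) → ℝ := fun z => ∏ i, κ q (z i)
  let pt : ({i // i ∉ J} → Fin q) → ({i // i ∈ J} → Fin q) → Fin s → ℤ :=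
    fun y z i => ((e.symm (z, y) i : ℕ) : ℤ)
  have ptJ : ∀ y z (i : {i // i ∈ J}), e.symm (z, y) i = z i := by
    intro y z i
    simp [e, Equiv.piEquivPiSubtypeProd]
  have ptJc : ∀ y z (i : {i // i ∉ J}), e.symm (z, y) i = y i := by
    intro y z i
    simp [e, Equiv.piEquivPiSubtypeProd, i.2]
  let φ : ({i // i ∉ J} → Fin q) → ({i // i ∈ J} → Fin q) → ℂ :=
    fun y z => eC ((b : ℝ) / q * ((qf F (pt y z) - t : ℤ) : ℝ))
  have hS : Sta F t κ q b = ∑ y, ∑ z, (wY y : ℂ) * (wZ z : ℂ) * φ y z := by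
    unfold Sta
    rw [aux_pi_sum, ← Equiv.sum_comp e.symm, Fintype.sum_prod_type_right]
    refine Finset.sum_congr rfl fun y _ => Finset.sum_congr rfl fun z _ => ?_
    congr 1
    rw [← Fintype.prod_subtype_mul_prod_subtype (fun i => i ∈ J)]
    simp only [ptJ, ptJc, wY, wZ]
    push_cast
    rw [mul_comm]
    congr!
  have hsumpi : ∀ (ι : Type) [Fintype ι] [DecidableEq ι], ∑ y : ι → Fin q, ∏ i, κ q (y i) = 1 := by
    intro ι _ _
    have := Finset.prod_univ_sum (fun _ : ι => (Finset.univ : Finset (Fin q))) (fun _ x => κ q x)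
    rw [Fintype.piFinset_univ] at this
    rw [← this]
    simp [hsum1]
  let Q : ({i // i ∈ J} → Fin q) → ({i // i ∈ J} → Fin q) → {i // i ∈ J} → Prop :=
    fun z z' j => (q : ℤ) ∣ (2 * N) * (((z j : ℕ) : ℤ) - ((z' j : ℕ) : ℤ))
  let E : ({i // i ∈ J} → Fin q) → ({i // i ∈ J} → Fin q) → ℝ :=
    fun z z' => (q : ℝ) ^ (s - 5) * ∏ j, if Q z z' j then 1 else 0
  have hAM := aux_core wY wZ (fun y => Finset.prod_nonneg fun i _ => hκ0 _ _)
    (fun z => Finset.prod_nonneg fun i _ => hκ0 _ _) (hsumpi _) (hsumpi _)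
    ((K / q) ^ (s - 5)) ((q : ℝ) ^ (s - 5) * (4 * |(N : ℝ)| * K / q) ^ 5) (by positivity)
    ?_ φ E ?_ ?_
  · rw [hS]
    refine hAM.trans (le_of_eq ?_)
    rw [← mul_assoc, ← mul_pow, div_mul_cancel₀ _ hqR.ne']
  · intro y
    calc wY y ≤ ∏ i : {i // i ∉ J}, K / q :=
          Finset.prod_le_prod (fun i _ => hκ0 _ _) (fun i _ => hK _)
      _ = _ := by rw [Finset.prod_const, Finset.card_univ, hcardY]
  · intro z z'
    have hE0 : 0 ≤ E z z' := by
      refine mul_nonneg (by positivity) (Finset.prod_nonneg fun j _ => ?_)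
      split_ifs <;> norm_num
    let zz : ({i // i ∈ J} → Fin q) → Fin s → ℤ :=
      fun z i => if h : i ∈ J then ((z ⟨i, h⟩ : ℕ) : ℤ) else 0
    have hzz : ∀ y z, ∀ i ∈ J, pt y z i = zz z i := by
      intro y z i hi
      simp only [pt, zz, dif_pos hi]
      rw [← ptJ y z ⟨i, hi⟩]
    let c : Fin s → ℤ := fun i => 2 * ∑ j ∈ J, F i j * (zz z j - zz z' j)
    let g : ℤ := ∑ i ∈ J, ∑ j ∈ J, F i j * (zz z i * zz z j - zz z' i * zz z' j)
    have hd : ∀ y, qf F (pt y z) - qf F (pt y z') = g + ∑ i : {i // i ∉ J}, ((y i : ℕ) : ℤ) * c i := by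
      intro y
      rw [aux_qf_diff F hF J (pt y z) (pt y z')]
      · congr 1
        · refine Finset.sum_congr rfl fun i hi => Finset.sum_congr rfl fun j hj => ?_
          rw [hzz _ _ i hi, hzz _ _ j hj, hzz _ _ i hi, hzz _ _ j hj]
        · rw [Finset.sum_subtype (Jᶜ) (p := fun i => i ∉ J) (fun x => Finset.mem_compl)]
          refine Finset.sum_congr rfl fun i _ => ?_
          have h1 : pt y z i = ((y i : ℕ) : ℤ) := by
            simp only [pt]
            rw [ptJc]
          rw [h1]
          simp only [c]
          rw [Finset.sum_congr rfl fun j hj => by rw [hzz _ _ j hj, hzz _ _ j hj]]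
      · intro i hi
        have h1 := ptJc y z ⟨i, hi⟩
        have h2 := ptJc y z' ⟨i, hi⟩
        simp only [pt]
        rw [h1, h2]
    have hprod : ∀ y, φ y z * (starRingEnd ℂ) (φ y z')
        = eC ((b : ℝ) / q * g) * ∏ i : {i // i ∉ J}, eC (((b * c i : ℤ) : ℝ) / q * (y i : ℕ)) := by
      intro y
      simp only [φ]
      rw [aux_eC_conj, ← aux_eC_add, ← aux_eC_sum, ← aux_eC_add]
      congr 1
      have h1 : (b : ℝ) / q * ((qf F (pt y z) - t : ℤ) : ℝ)
          + -((b : ℝ) / q * ((qf F (pt y z') - t : ℤ) : ℝ))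
          = (b : ℝ) / q * ((qf F (pt y z) - qf F (pt y z') : ℤ) : ℝ) := by
        push_cast; ring
      rw [h1, hd y]
      push_cast
      rw [mul_add, Finset.mul_sum]
      congr 1
      refine Finset.sum_congr rfl fun i _ => ?_
      ring
    have hsumY : ∑ y, φ y z * (starRingEnd ℂ) (φ y z') = eC ((b : ℝ) / q * g) *
        ∏ i : {i // i ∉ J}, (if (q : ℤ) ∣ b * c i then (q : ℂ) else 0) := by
      simp_rw [hprod]
      rw [← Finset.mul_sum]
      congr 1
      have := Finset.prod_univ_sum (fun _ : {i // i ∉ J} => (Finset.univ : Finset (Fin q)))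
        (fun i x => eC (((b * c i : ℤ) : ℝ) / q * (x : ℕ)))
      rw [Fintype.piFinset_univ] at this
      rw [← this]
      refine Finset.prod_congr rfl fun i _ => ?_
      rw [← aux_orth q hq, Finset.sum_range]
    rw [hsumY, norm_mul, aux_eC_norm, one_mul]
    by_cases hall : ∀ i : {i // i ∉ J}, (q : ℤ) ∣ b * c i
    · have hQ : ∀ j, Q z z' j := by
        intro j
        have hc : ∀ i ∈ Jᶜ, (q : ℤ) ∣ c i := fun i hi =>
          hb.dvd_of_dvd_mul_left (hall ⟨i, Finset.mem_compl.1 hi⟩)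
        have h1 : (q : ℤ) ∣ ∑ i ∈ Jᶜ, L j i * c i :=
          Finset.dvd_sum fun i hi => Dvd.dvd.mul_left (hc i hi) _
        have h2 : ∑ i ∈ Jᶜ, L j i * c i = 2 * ∑ j' ∈ J, (∑ i ∈ Jᶜ, L j i * F i j') * (zz z j' - zz z' j') := by
          simp only [c, Finset.mul_sum, Finset.sum_mul]
          rw [Finset.sum_comm]
          refine Finset.sum_congr rfl fun j' _ => Finset.sum_congr rfl fun i _ => ?_
          ring
        have h3 : ∑ j' ∈ J, (∑ i ∈ Jᶜ, L j i * F i j') * (zz z j' - zz z' j')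
            = N * (zz z j - zz z' j) := by
          rw [Finset.sum_congr rfl fun j' hj' => by rw [hL j j.2 j' hj']]
          rw [Finset.sum_eq_single (j : Fin s)]
          · simp
          · intro j' _ hne
            rw [if_neg hne.symm, zero_mul]
          · intro h; exact absurd j.2 h
        rw [h2, h3] at h1
        simp only [zz, dif_pos j.2] at h1
        simp only [Q]
        rw [mul_assoc]
        exact h1
      have : E z z' = (q : ℝ) ^ (s - 5) := by
        simp only [E, hQ, if_true, Finset.prod_const_one, mul_one]
      rw [this, Finset.prod_congr rfl fun i _ => if_pos (hall i), Finset.prod_const,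
        Finset.card_univ, hcardY, norm_pow, Complex.norm_natCast]
    · push Not at hall
      obtain ⟨i, hi⟩ := hall
      rw [Finset.prod_eq_zero (Finset.mem_univ i) (if_neg hi), norm_zero]
      exact hE0
  · intro z'
    have h1 : ∑ z, wZ z * E z z' = (q : ℝ) ^ (s - 5) *
        ∏ j, ∑ x : Fin q, (if (q : ℤ) ∣ (2 * N) * (((x : ℕ) : ℤ) - ((z' j : ℕ) : ℤ)) then κ q x else 0) := by
      have := Finset.prod_univ_sum (fun _ : {i // i ∈ J} => (Finset.univ : Finset (Fin q)))
        (fun j x => (if (q : ℤ) ∣ (2 * N) * (((x : ℕ) : ℤ) - ((z' j : ℕ) : ℤ)) then κ q x else 0))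
      rw [Fintype.piFinset_univ] at this
      rw [this, Finset.mul_sum]
      refine Finset.sum_congr rfl fun z _ => ?_
      simp only [wZ, E, Q]
      rw [mul_left_comm, ← Finset.prod_mul_distrib]
      congr 1
      refine Finset.prod_congr rfl fun j _ => ?_
      rw [mul_ite, mul_one, mul_zero]
    rw [h1]
    refine mul_le_mul_of_nonneg_left ?_ (by positivity)
    calc _ ≤ ∏ j : {i // i ∈ J}, (4 * |(N : ℝ)| * K / q) := by
          refine Finset.prod_le_prod (fun j _ => Finset.sum_nonneg fun x _ => ?_) (fun j _ => ?_)
          · split_ifs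
            · exact hκ0 _ _
            · exact le_rfl
          · rw [← Finset.sum_filter]
            have h2 := aux_count q hq (2 * N) (by simpa using hN) (z' j)
            have h3 := Finset.sum_le_card_nsmul ((Finset.univ : Finset (Fin q)).filter
              (fun x : Fin q => (q : ℤ) ∣ (2 * N) * (((x : ℕ) : ℤ) - ((z' j : ℕ) : ℤ))))
              (fun x => κ q x) (K / q) (fun x _ => hK _)
            refine h3.trans ?_
            rw [nsmul_eq_mul]
            have h4 : ((2 * (2 * N).natAbs : ℕ) : ℝ) = 4 * |(N : ℝ)| := by
              rw [Int.natAbs_mul]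
              push_cast
              rw [Nat.cast_natAbs]
              push_cast
              ring
            rw [mul_div_assoc, ← h4]
            exact mul_le_mul_of_nonneg_right (by exact_mod_cast h2) (by positivity)
      _ = _ := by rw [Finset.prod_const, Finset.card_univ, hcardZ]

lemma aux_summable {s : ℕ} (F : Matrix (Fin s) (Fin s) ℤ) (hF : F.IsSymm) (t : ℤ)
    (κ : ℕ → ℕ → ℝ) (hκ0 : ∀ q h, 0 ≤ κ q h)
    (hκsum : ∀ q : ℕ, 0 < q → ∑ h ∈ Finset.range q, κ q h = 1)
    (hL1 : CondL1 F) (hK : CondK κ) (p : ℕ) (hp : p.Prime) :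
    Summable (fun k : ℕ => BqT F t κ (p ^ k)) := by
  obtain ⟨J, N, L, hJ, hN, hL⟩ := aux_extract F hL1
  obtain ⟨c, hc0, C, hC0, hκ⟩ := hK
  have hp1 : (1 : ℝ) < p := by exact_mod_cast hp.one_lt
  have hp0 : (0 : ℝ) < p := by linarith
  have hlog : 0 < Real.log p := Real.log_pos hp1
  set C' : ℝ := C * (Real.log p) ^ c with hC'
  have hC'0 : 0 ≤ C' := by positivity
  set d : ℕ := ⌈c⌉₊ with hd
  set n : ℕ := s - 5 with hn
  set D : ℝ := 1 + C' ^ n * (4 * |(N : ℝ)| * C') ^ 5 with hD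
  have hD1 : 1 ≤ D := by
    have : 0 ≤ C' ^ n * (4 * |(N : ℝ)| * C') ^ 5 := by positivity
    linarith
  have hbound : ∀ k : ℕ, 1 ≤ k → ‖BqT F t κ (p ^ k)‖ ≤ D * ((k : ℝ) ^ (d * (n + 5)) * ((p : ℝ)⁻¹) ^ k) := by
    intro k hk
    have hk1 : (1 : ℝ) ≤ k := by exact_mod_cast hk
    have hq : 0 < p ^ k := pow_pos hp.pos k
    have hq2 : 2 ≤ p ^ k := hp.two_le.trans (Nat.le_self_pow (by omega) p)
    have hqR : (1 : ℝ) ≤ ((p ^ k : ℕ) : ℝ) := by exact_mod_cast hq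
    have hqR0 : (0 : ℝ) < ((p ^ k : ℕ) : ℝ) := by linarith
    have hKb : ∀ h, κ (p ^ k) h ≤ (C' * (k : ℝ) ^ d) / ((p ^ k : ℕ) : ℝ) := by
      intro h
      refine (hκ (p ^ k) hq2 h).trans ?_
      refine div_le_div_of_nonneg_right ?_ hqR0.le
      have h1 : Real.log ((p ^ k : ℕ) : ℝ) = k * Real.log p := by
        push_cast
        rw [Real.log_pow]
      rw [h1, Real.mul_rpow (by positivity) hlog.le, hC']
      have h2 : (k : ℝ) ^ c ≤ (k : ℝ) ^ d := by
        rw [← Real.rpow_natCast]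
        exact Real.rpow_le_rpow_of_exponent_le hk1 (Nat.le_ceil c)
      calc C * ((k : ℝ) ^ c * Real.log p ^ c) = C * Real.log p ^ c * (k : ℝ) ^ c := by ring
        _ ≤ _ := mul_le_mul_of_nonneg_left h2 hC'0
    have hS : ∀ x ∈ (Finset.Icc 1 (p ^ k)).filter (fun aa => Nat.Coprime aa (p ^ k)),
        ‖Sta F t κ (p ^ k) (x : ℤ)‖ ≤ D * (k : ℝ) ^ (d * (n + 5)) / ((p ^ k : ℕ) : ℝ) ^ 2 := by
      intro x hx
      have hcop : IsCoprime (((p ^ k : ℕ)) : ℤ) (x : ℤ) :=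
        Nat.isCoprime_iff_coprime.2 (Finset.mem_filter.1 hx).2.symm
      have h1 := aux_Sta_bound F hF t κ hκ0 hκsum J N L hJ hN hL (p ^ k) hq (C' * (k : ℝ) ^ d)
        (by positivity) hKb x hcop
      refine (pow_le_pow_iff_left₀ (norm_nonneg _) (by positivity) two_ne_zero).1 (h1.trans ?_)
      generalize ((p ^ k : ℕ) : ℝ) = q at *
      have e1 : (C' * (k : ℝ) ^ d) ^ (s - 5) * (4 * |(N : ℝ)| * (C' * (k : ℝ) ^ d) / q) ^ 5
          = (C' ^ n * (4 * |(N : ℝ)| * C') ^ 5) * (k : ℝ) ^ (d * (n + 5)) / q ^ 5 := by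
        rw [← hn, mul_pow C', ← pow_mul, div_pow, ← mul_assoc (4 * |(N : ℝ)|), mul_pow _ ((k : ℝ) ^ d),
          ← pow_mul, mul_add, pow_add]
        ring
      rw [e1, div_pow, mul_pow D, ← pow_mul q]
      have hkk : 1 ≤ (k : ℝ) ^ (d * (n + 5)) := one_le_pow₀ hk1
      generalize (k : ℝ) ^ (d * (n + 5)) = R at *
      have e2 : C' ^ n * (4 * |(N : ℝ)| * C') ^ 5 ≤ D ^ 2 := by
        have : C' ^ n * (4 * |(N : ℝ)| * C') ^ 5 = D - 1 := by rw [hD]; ring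
        rw [this]; nlinarith
      refine div_le_div₀ (by positivity) ?_ (by positivity) (pow_le_pow_right₀ hqR (by norm_num))
      exact mul_le_mul e2 (by nlinarith) (by positivity) (by positivity)
    unfold BqT
    refine (norm_sum_le_of_le _ hS).trans ?_
    rw [Finset.sum_const, nsmul_eq_mul]
    have hcard : ((((Finset.Icc 1 (p ^ k)).filter (fun aa => Nat.Coprime aa (p ^ k))).card : ℕ) : ℝ)
        ≤ ((p ^ k : ℕ) : ℝ) := by
      have := Finset.card_filter_le (Finset.Icc 1 (p ^ k)) (fun aa => Nat.Coprime aa (p ^ k))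
      rw [Nat.card_Icc, Nat.add_sub_cancel] at this
      exact_mod_cast this
    refine (mul_le_mul_of_nonneg_right hcard (by positivity)).trans (le_of_eq ?_)
    rw [inv_pow]
    push_cast
    field_simp
  have hsum : Summable (fun k : ℕ => D * ((k : ℝ) ^ (d * (n + 5)) * ((p : ℝ)⁻¹) ^ k)) := by
    refine Summable.mul_left _ (summable_pow_mul_geometric_of_norm_lt_one _ ?_)
    rw [norm_inv, Real.norm_of_nonneg hp0.le]
    exact inv_lt_one_of_one_lt₀ hp1
  refine (summable_nat_add_iff 1).1 ?_
  refine Summable.of_norm_bounded ((summable_nat_add_iff 1).2 hsum) fun k => ?_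
  exact hbound (k + 1) (by omega)

/-- Lemma 5.7: the weighted `p`-adic density equals `χ̃_p(𝒜)`,
i.e. `χ̃_p(𝒜) = lim_{m→∞} p^m M(p^m)`. -/
theorem statement11 {s : ℕ} (F : Matrix (Fin s) (Fin s) ℤ) (hFsymm : F.IsSymm) (t : ℤ)
    (a : ℕ → ℝ) (ha : ∀ x, 0 ≤ a x) (QD : ℝ → ℝ) (κ : ℕ → ℕ → ℝ)
    (hκ0 : ∀ q h, 0 ≤ κ q h)
    (hκsum : ∀ q : ℕ, 0 < q → ∑ h ∈ Finset.range q, κ q h = 1)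
    (hκcompat : ∀ q q' : ℕ, 0 < q → 0 < q' → ∀ h : ℕ,
      κ q h = ∑ b ∈ Finset.range (q * q'), if b % q = h % q then κ (q * q') b else 0)
    (hL1 : CondL1 F) (hC : CondC QD κ) (hD : CondD a QD κ) (hK : CondK κ) :
    ∀ p : ℕ, p.Prime → ∃ χ : ℂ,
      HasSum (fun k : ℕ => BqT F t κ (p ^ k)) χ ∧
      Filter.Tendsto (fun m : ℕ => (((p : ℝ) ^ m * Mcount F t κ (p ^ m) : ℝ) : ℂ))
        Filter.atTop (nhds χ) := by
  intro p hp
  obtain ⟨χ, hχ⟩ := aux_summable F hFsymm t κ hκ0 hκsum hL1 hK p hp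
  refine ⟨χ, hχ, ?_⟩
  simp_rw [aux_partial F t κ hκcompat p hp]
  exact hχ.tendsto_sum_nat.comp (Filter.tendsto_add_atTop_nat 1)


end
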